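/- arXiv:1204.6160 — 2 statements merged into one kernel-verified Lean document; each statement's English description precedes it below -/
import Mathlib

section
/- Let K : ℝ^d → ℝ be a probability density with K(−x) = K(x) for all x, with finite absolute moments up to order 3, and with ∫_{ℝ^d} x x^⊤ K(x) dx = m₂ I_d for some m₂ ∈ ℝ. Let K̃ = K*K − 2K. Then: (i) ∫ K̃(x) dx = −1; (ii) ∫ x_i K̃(x) dx = 0 for every i; (iii) ∫ x_i x_j K̃(x) dx = 0 for all i, j; (iv) ∫ x_i x_j x_k K̃(x) dx = 0 for all i, j, k. -/
/-!
Additive maps `ℓ i` satisfy `ℓ i x = ℓ i y + ℓ i (x - y)`, so multiplication by `∏ i ∈ s, ℓ i` acts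
on a convolution by the Leibniz rule, and by Fubini
`∫ (∏ i ∈ s, ℓ i) (f ⋆ g) = ∑ t ⊆ s, (∫ (∏ i ∈ t, ℓ i) f) (∫ (∏ i ∈ s \ t, ℓ i) g)`.
For `f = g = K` of total mass one, the terms `t = s` and `t = ∅` contribute twice the moment of `K`,
which `-2K` cancels. In every other term the two factors have orders adding up to `#s`; if
`#s < 2 * p` one of them has order less than `p`, so it is enough that these moments of `K` vanish.
A symmetric `K` has zero mean, which is the case `p = 2`.
-/

open MeasureTheory

open scoped Convolution Finset

lemma integral_eq_zero_of_odd {G E : Type*} [AddGroup G] [MeasurableSpace G]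
    [MeasurableNeg G] {μ : Measure G} [μ.IsNegInvariant] [NormedAddCommGroup E] [NormedSpace ℝ E]
    {f : G → E} (hf : f.Odd) : ∫ x, f x ∂μ = 0 := by
  have h : ∫ x, f x ∂μ = -∫ x, f x ∂μ := by
    rw [← integral_neg, ← integral_neg_eq_self f μ]
    exact integral_congr_ae (.of_forall hf)
  have : IsAddTorsionFree E := .of_isTorsionFree ℝ E
  exact self_eq_neg.mp h

section AddGroup

variable {G 𝕜 ι : Type*} [AddGroup G]

lemma prod_addMonoidHom_eq_sum_powerset {R : Type*} [CommRing R] [DecidableEq ι]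
    (ℓ : ι → G →+ R) (s : Finset ι) (x y : G) :
    ∏ i ∈ s, ℓ i x = ∑ t ∈ s.powerset, (∏ i ∈ t, ℓ i y) * ∏ i ∈ s \ t, ℓ i (x - y) := by
  rw [← Finset.prod_add]
  refine Finset.prod_congr rfl fun i _ => ?_
  rw [map_sub, add_sub_cancel]

variable [RCLike 𝕜] [MeasurableSpace G] [MeasurableAdd₂ G] [MeasurableNeg G]
  {μ : Measure G} [SFinite μ] [μ.IsAddRightInvariant]
  {ℓ : ι → G →+ 𝕜} {s : Finset ι} {f g K : G → 𝕜}

lemma prod_mul_convolution_ae_eq_sum [DecidableEq ι]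
    (hf : ∀ t ⊆ s, Integrable (fun x => (∏ i ∈ t, ℓ i x) * f x) μ)
    (hg : ∀ t ⊆ s, Integrable (fun x => (∏ i ∈ t, ℓ i x) * g x) μ) :
    (fun x => (∏ i ∈ s, ℓ i x) * (f ⋆[.mul 𝕜 𝕜, μ] g) x) =ᵐ[μ]
      fun x => ∑ t ∈ s.powerset, ((fun y => (∏ i ∈ t, ℓ i y) * f y) ⋆[.mul 𝕜 𝕜, μ]
        fun y => (∏ i ∈ s \ t, ℓ i y) * g y) x := by
  have hexists : ∀ᵐ x ∂μ, ∀ t ∈ s.powerset, ConvolutionExistsAt (fun y => (∏ i ∈ t, ℓ i y) * f y)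
      (fun y => (∏ i ∈ s \ t, ℓ i y) * g y) x (.mul 𝕜 𝕜) μ :=
    (Finset.eventually_all _).mpr fun t ht =>
      (hf t (Finset.mem_powerset.mp ht)).ae_convolution_exists _ (hg _ Finset.sdiff_subset)
  filter_upwards [hexists] with x hx
  simp only [convolution_def]
  rw [← integral_finsetSum _ hx, ← integral_const_mul]
  refine integral_congr_ae (.of_forall fun y => ?_)
  simp only [ContinuousLinearMap.mul_apply']
  rw [prod_addMonoidHom_eq_sum_powerset ℓ s x y, Finset.sum_mul]
  exact Finset.sum_congr rfl fun t _ => by ring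

lemma integrable_prod_mul_convolution
    (hf : ∀ t ⊆ s, Integrable (fun x => (∏ i ∈ t, ℓ i x) * f x) μ)
    (hg : ∀ t ⊆ s, Integrable (fun x => (∏ i ∈ t, ℓ i x) * g x) μ) :
    Integrable (fun x => (∏ i ∈ s, ℓ i x) * (f ⋆[.mul 𝕜 𝕜, μ] g) x) μ := by
  classical
  exact (integrable_finsetSum _ fun t ht =>
    (hf t (Finset.mem_powerset.mp ht)).integrable_convolution _
      (hg _ Finset.sdiff_subset)).congr (prod_mul_convolution_ae_eq_sum hf hg).symm

lemma integral_prod_mul_convolution [DecidableEq ι]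
    (hf : ∀ t ⊆ s, Integrable (fun x => (∏ i ∈ t, ℓ i x) * f x) μ)
    (hg : ∀ t ⊆ s, Integrable (fun x => (∏ i ∈ t, ℓ i x) * g x) μ) :
    ∫ x, (∏ i ∈ s, ℓ i x) * (f ⋆[.mul 𝕜 𝕜, μ] g) x ∂μ =
      ∑ t ∈ s.powerset, (∫ x, (∏ i ∈ t, ℓ i x) * f x ∂μ) *
        ∫ x, (∏ i ∈ s \ t, ℓ i x) * g x ∂μ := by
  have hf' : ∀ t ∈ s.powerset, Integrable (fun x => (∏ i ∈ t, ℓ i x) * f x) μ :=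
    fun t ht => hf t (Finset.mem_powerset.mp ht)
  have hg' : ∀ t, Integrable (fun x => (∏ i ∈ s \ t, ℓ i x) * g x) μ :=
    fun t => hg _ Finset.sdiff_subset
  rw [integral_congr_ae (prod_mul_convolution_ae_eq_sum hf hg),
    integral_finsetSum _ fun t ht => (hf' t ht).integrable_convolution _ (hg' t)]
  exact Finset.sum_congr rfl fun t ht => integral_convolution _ (hf' t ht) (hg' t)

lemma integral_prod_mul_convolution_self {p : ℕ} (hs : s.Nonempty) (hp : #s < 2 * p)
    (hK : ∀ t ⊆ s, Integrable (fun x => (∏ i ∈ t, ℓ i x) * K x) μ) (hK1 : ∫ x, K x ∂μ = 1)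
    (hvanish : ∀ t ⊆ s, t.Nonempty → #t < p → ∫ x, (∏ i ∈ t, ℓ i x) * K x ∂μ = 0) :
    ∫ x, (∏ i ∈ s, ℓ i x) * (K ⋆[.mul 𝕜 𝕜, μ] K) x ∂μ =
      2 * ∫ x, (∏ i ∈ s, ℓ i x) * K x ∂μ := by
  classical
  have hmixed : ∀ t ∈ s.powerset, t ≠ ∅ ∧ t ≠ s →
      (∫ x, (∏ i ∈ t, ℓ i x) * K x ∂μ) * ∫ x, (∏ i ∈ s \ t, ℓ i x) * K x ∂μ = 0 := by
    rintro t ht ⟨ht_empty, ht_ne⟩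
    have hts : t ⊆ s := Finset.mem_powerset.mp ht
    have hcard : #(s \ t) + #t = #s := Finset.card_sdiff_add_card_eq_card hts
    rcases lt_or_ge #t p with hlt | hge
    · rw [hvanish t hts (Finset.nonempty_iff_ne_empty.mpr ht_empty) hlt, zero_mul]
    · have hne : (s \ t).Nonempty := Finset.sdiff_nonempty.mpr fun h => ht_ne (hts.antisymm h)
      rw [hvanish (s \ t) Finset.sdiff_subset hne (by lia), mul_zero]
  rw [integral_prod_mul_convolution hK hK, Finset.sum_eq_add_of_mem ∅ s (by simp) (by simp)
    hs.ne_empty.symm hmixed]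
  simp only [Finset.prod_empty, one_mul, Finset.sdiff_empty, sdiff_self, Finset.bot_eq_empty, hK1,
    mul_one, two_mul]

theorem integral_prod_mul_convolution_self_sub_two_mul {p : ℕ} (hs : s.Nonempty) (hp : #s < 2 * p)
    (hK : ∀ t ⊆ s, Integrable (fun x => (∏ i ∈ t, ℓ i x) * K x) μ) (hK1 : ∫ x, K x ∂μ = 1)
    (hvanish : ∀ t ⊆ s, t.Nonempty → #t < p → ∫ x, (∏ i ∈ t, ℓ i x) * K x ∂μ = 0) :
    ∫ x, (∏ i ∈ s, ℓ i x) * ((K ⋆[.mul 𝕜 𝕜, μ] K) x - 2 * K x) ∂μ = 0 := by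
  simp only [mul_sub, mul_left_comm _ (2 : 𝕜)]
  rw [integral_sub (integrable_prod_mul_convolution hK hK) ((hK s subset_rfl).const_mul 2),
    integral_prod_mul_convolution_self hs hp hK hK1 hvanish, integral_const_mul, sub_self]

lemma integral_convolution_self_sub_two_mul (hK : Integrable K μ) (hK1 : ∫ x, K x ∂μ = 1) :
    ∫ x, ((K ⋆[.mul 𝕜 𝕜, μ] K) x - 2 * K x) ∂μ = -1 := by
  rw [integral_sub (hK.integrable_convolution _ hK) (hK.const_mul 2),
    integral_convolution _ hK hK, integral_const_mul, hK1, ContinuousLinearMap.mul_apply']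
  norm_num

end AddGroup

section NormedSpace

variable {E : Type*} [NormedAddCommGroup E] [NormedSpace ℝ E] [MeasurableSpace E]
  {μ : Measure E} {K : E → ℝ}

lemma integrable_prod_strongDual_mul [OpensMeasurableSpace E] {ι : Type*}
    (ℓ : ι → StrongDual ℝ E) (s : Finset ι) (hK : AEStronglyMeasurable K μ)
    (hs : Integrable (fun x => ‖x‖ ^ #s * K x) μ) :
    Integrable (fun x => (∏ i ∈ s, ℓ i x) * K x) μ := by
  have hcont : Continuous fun x => ∏ i ∈ s, ℓ i x := by fun_prop
  refine (hs.const_mul (∏ i ∈ s, ‖ℓ i‖)).mono (hcont.aestronglyMeasurable.mul hK)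
    (.of_forall fun x => ?_)
  calc ‖(∏ i ∈ s, ℓ i x) * K x‖ = (∏ i ∈ s, ‖ℓ i x‖) * ‖K x‖ := by rw [norm_mul, norm_prod]
    _ ≤ (∏ i ∈ s, ‖ℓ i‖ * ‖x‖) * ‖K x‖ := by
      gcongr with i
      exact (ℓ i).le_opNorm x
    _ = ‖(∏ i ∈ s, ‖ℓ i‖) * (‖x‖ ^ #s * K x)‖ := by
      simp only [Finset.prod_mul_distrib, Finset.prod_const, norm_mul, norm_prod, norm_pow,
        norm_norm, mul_assoc]

variable [BorelSpace E] [SecondCountableTopology E] [SFinite μ] [μ.IsAddRightInvariant]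

theorem integral_prod_strongDual_mul_convolution_self_sub_two_mul {ι : Type*} {p : ℕ}
    {ℓ : ι → StrongDual ℝ E} {s : Finset ι} (hs : s.Nonempty) (hp : #s < 2 * p)
    (hmom : ∀ k ≤ #s, Integrable (fun x => ‖x‖ ^ k * K x) μ) (hK1 : ∫ x, K x ∂μ = 1)
    (hvanish : ∀ t ⊆ s, t.Nonempty → #t < p → ∫ x, (∏ i ∈ t, ℓ i x) * K x ∂μ = 0) :
    ∫ x, (∏ i ∈ s, ℓ i x) * ((K ⋆[.mul ℝ ℝ, μ] K) x - 2 * K x) ∂μ = 0 := by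
  have hK : Integrable K μ := by simpa using hmom 0 (Nat.zero_le _)
  exact integral_prod_mul_convolution_self_sub_two_mul (ℓ := fun i => (ℓ i : E →+ ℝ)) hs hp
    (fun t ht => integrable_prod_strongDual_mul ℓ t hK.aestronglyMeasurable
      (hmom _ (Finset.card_le_card ht))) hK1 hvanish

theorem moments_conv_sub_two_smul_general (hK1 : ∫ x, K x ∂μ = 1)
    (hmean : ∀ ℓ : StrongDual ℝ E, ∫ x, ℓ x * K x ∂μ = 0)
    (hmom : ∀ k : ℕ, k ≤ 3 → Integrable (fun x => ‖x‖ ^ k * K x) μ) :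
    (∫ x, ((∫ y, K (x - y) * K y ∂μ) - 2 * K x) ∂μ = -1) ∧
    (∀ ℓ : StrongDual ℝ E, ∫ x, ℓ x * ((∫ y, K (x - y) * K y ∂μ) - 2 * K x) ∂μ = 0) ∧
    (∀ ℓ₁ ℓ₂ : StrongDual ℝ E,
      ∫ x, ℓ₁ x * ℓ₂ x * ((∫ y, K (x - y) * K y ∂μ) - 2 * K x) ∂μ = 0) ∧
    (∀ ℓ₁ ℓ₂ ℓ₃ : StrongDual ℝ E,
      ∫ x, ℓ₁ x * ℓ₂ x * ℓ₃ x * ((∫ y, K (x - y) * K y ∂μ) - 2 * K x) ∂μ = 0) := by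
  have hK : Integrable K μ := by simpa using hmom 0 (by norm_num)
  have hconv : ∀ x, ∫ y, K (x - y) * K y ∂μ = (K ⋆[.mul ℝ ℝ, μ] K) x := fun x => by
    simp only [convolution_def, ContinuousLinearMap.mul_apply', mul_comm]
  simp only [hconv]
  have hprod : ∀ n : ℕ, n + 1 ≤ 3 → ∀ ℓ : Fin (n + 1) → StrongDual ℝ E,
      ∫ x, (∏ i, ℓ i x) * ((K ⋆[.mul ℝ ℝ, μ] K) x - 2 * K x) ∂μ = 0 := by
    intro n hn ℓ
    refine integral_prod_strongDual_mul_convolution_self_sub_two_mul (p := 2)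
      Finset.univ_nonempty (by rw [Finset.card_fin]; lia)
      (fun k hk => hmom k (hk.trans (by rwa [Finset.card_fin]))) hK1 fun t _ ht ht_lt => ?_
    have ht_one : #t = 1 := by have := ht.card_pos; lia
    obtain ⟨i, rfl⟩ := Finset.card_eq_one.mp ht_one
    simpa only [Finset.prod_singleton] using hmean (ℓ i)
  exact ⟨integral_convolution_self_sub_two_mul hK hK1,
    fun ℓ => by simpa using hprod 0 (by norm_num) ![ℓ],
    fun ℓ₁ ℓ₂ => by simpa [Fin.prod_univ_two] using hprod 1 (by norm_num) ![ℓ₁, ℓ₂],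
    fun ℓ₁ ℓ₂ ℓ₃ => by simpa [Fin.prod_univ_three] using hprod 2 le_rfl ![ℓ₁, ℓ₂, ℓ₃]⟩

end NormedSpace

/-- Moments of `K̃ = K*K − 2K` up to order 3: if `K` is a symmetric probability density on `ℝ^d`
with finite absolute moments up to order 3 and `∫ x xᵀ K(x) dx = m₂ I_d`, then
`μ₀(K̃) = −1` and `μ₁(K̃) = μ₂(K̃) = μ₃(K̃) = 0`. -/
theorem moments_conv_sub_two_smul {d : ℕ} (K : (Fin d → ℝ) → ℝ)
    (hK0 : ∀ x, 0 ≤ K x) (hK1 : ∫ x, K x = 1) (hsym : ∀ x, K (-x) = K x)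
    (hmom : ∀ k : ℕ, k ≤ 3 → Integrable fun x => ‖x‖ ^ k * K x)
    (m₂ : ℝ)
    (hm₂ : ∀ i j : Fin d, ∫ x, x i * x j * K x = if i = j then m₂ else 0) :
    (∫ x, ((∫ y, K (x - y) * K y) - 2 * K x) = -1) ∧
    (∀ i : Fin d, ∫ x, x i * ((∫ y, K (x - y) * K y) - 2 * K x) = 0) ∧
    (∀ i j : Fin d, ∫ x, x i * x j * ((∫ y, K (x - y) * K y) - 2 * K x) = 0) ∧
    (∀ i j k : Fin d,
      ∫ x, x i * x j * x k * ((∫ y, K (x - y) * K y) - 2 * K x) = 0) := by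
  have hmean (ℓ : StrongDual ℝ (Fin d → ℝ)) : ∫ x, ℓ x * K x = 0 :=
    integral_eq_zero_of_odd fun x => by rw [map_neg, hsym, neg_mul]
  let π := ContinuousLinearMap.proj (R := ℝ) (φ := fun _ : Fin d => ℝ)
  obtain ⟨h₀, h₁, h₂, h₃⟩ := moments_conv_sub_two_smul_general hK1 hmean hmom
  exact ⟨h₀, fun i => h₁ (π i), fun i j => h₂ (π i) (π j), fun i j k => h₃ (π i) (π j) (π k)⟩
end

section
/- Let k : ℝ → ℝ be differentiable with g = −k′, let x₁, …, xₙ ∈ ℝ^d, let H be a symmetric positive definite d×d matrix, and set q_i(y) = (y−x_i)^⊤ H^{−1} (y−x_i) and f̂_H(y) = n^{−1} (det H)^{−1/2} (1/2) ∑_{i=1}^n k(q_i(y)). If y ∈ ℝ^d satisfies ∑_{i=1}^n g(q_i(y)) > 0, then the gradient of f̂_H vanishes at y if and only if y = (∑_{i=1}^n x_i g(q_i(y))) / (∑_{i=1}^n g(q_i(y))), i.e. if and only if the mean shift m_H(y) = (∑ x_i g(q_i(y)))/(∑ g(q_i(y))) − y is zero. -/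
open MeasureTheory Matrix
open scoped RealInnerProductSpace

/-- The quadratic form `q_i(y) = (y − x_i)ᵀ H⁻¹ (y − x_i)` appearing in the kernel density
estimator with kernel profile `k`, written via the Euclidean inner product. -/
noncomputable def msQuad {d n : ℕ} (H : Matrix (Fin d) (Fin d) ℝ)
    (x : Fin n → EuclideanSpace ℝ (Fin d)) (i : Fin n) (y : EuclideanSpace ℝ (Fin d)) : ℝ :=
  ⟪y - x i, Matrix.toEuclideanLin H⁻¹ (y - x i)⟫

/-! For a symmetric operator `A` we have `∇ ⟪z - a, A (z - a)⟫ = 2 A (z - a)`, so the chain rule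
writes the gradient of `∑ᵢ k(qᵢ(y))` as `2 (∑ᵢ g(qᵢ(y))) A (m - y)`, where `m` is the center of
mass of the points `xᵢ` with weights `g(qᵢ(y))`. Hence the gradient is the image of the mean shift
`m - y` under a nonzero multiple of `A`, and for injective `A` the two vanish together. -/

section Gradient

variable {𝕜 E ι : Type*} [RCLike 𝕜] [NormedAddCommGroup E] [InnerProductSpace 𝕜 E]
  [CompleteSpace E]

theorem hasGradientAt_comp_of_hasDerivAt {h : 𝕜 → 𝕜} {h' : 𝕜} {f : E → 𝕜} {f' y : E}
    (hh : HasDerivAt h h' (f y)) (hf : HasGradientAt f f' y) :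
    HasGradientAt (fun z => h (f z)) (starRingEnd 𝕜 h' • f') y := by
  rw [hasGradientAt_iff_hasFDerivAt, map_smulₛₗ, RCLike.conj_conj]
  exact hh.comp_hasFDerivAt y hf.hasFDerivAt

theorem hasGradientAt_sum {s : Finset ι} {f : ι → E → 𝕜} {f' : ι → E} {y : E}
    (hf : ∀ i ∈ s, HasGradientAt (f i) (f' i) y) :
    HasGradientAt (fun z => ∑ i ∈ s, f i z) (∑ i ∈ s, f' i) y := by
  rw [hasGradientAt_iff_hasFDerivAt, map_sum]
  exact HasFDerivAt.fun_sum fun i hi => (hf i hi).hasFDerivAt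

end Gradient

theorem sum_smul_sub_eq_smul_centerMass_sub {R E ι : Type*} [Field R] [AddCommGroup E] [Module R E]
    {s : Finset ι} {w : ι → R} (hw : ∑ i ∈ s, w i ≠ 0) (x : ι → E) (y : E) :
    ∑ i ∈ s, w i • (x i - y) = (∑ i ∈ s, w i) • (s.centerMass w x - y) := by
  simp only [smul_sub, Finset.sum_sub_distrib, ← Finset.sum_smul, Finset.centerMass,
    smul_inv_smul₀ hw]

theorem injective_toLpLin_of_isUnit {R m : Type*} [CommRing R] [Fintype m] [DecidableEq m]
    {M : Matrix m m R} (hM : IsUnit M) (p q : ENNReal) :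
    Function.Injective (Matrix.toLpLin p q M) :=
  (WithLp.toLp_injective q).comp
    ((Matrix.mulVec_injective_of_isUnit hM).comp (WithLp.ofLp_injective p))

theorem ne_zero_of_sum_fin_ne_zero {M : Type*} [AddCommMonoid M] {n : ℕ} {w : Fin n → M}
    (hw : ∑ i, w i ≠ 0) : n ≠ 0 := by
  rintro rfl
  exact hw (Fin.sum_univ_zero w)

section MeanShift

variable {E ι : Type*} [NormedAddCommGroup E] [InnerProductSpace ℝ E] [CompleteSpace E]
  {A : E →ₗ[ℝ] E} {k : ℝ → ℝ} {s : Finset ι} {x : ι → E} {y : E}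

theorem hasGradientAt_inner_sub_map_sub (hA : A.IsSymmetric) (a y : E) :
    HasGradientAt (fun z => ⟪z - a, A (z - a)⟫) ((2 : ℝ) • A (y - a)) y := by
  -- Hellinger–Toeplitz: a symmetric operator on a complete space is bounded.
  let T : E →L[ℝ] E := ⟨A, hA.continuous⟩
  have hT : (T : E →ₗ[ℝ] E).IsSymmetric := hA
  have hquad : HasFDerivAt (fun z => T.reApplyInnerSelf (z - a)) (2 • innerSL ℝ (T (y - a))) y :=
    (hasFDerivAt_comp_sub a).mpr (hT.hasStrictFDerivAt_reApplyInnerSelf (y - a)).hasFDerivAt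
  rw [hasGradientAt_iff_hasFDerivAt]
  convert! hquad using 1
  · exact funext fun z => real_inner_comm _ _
  · ext v
    simp [T, two_smul]

theorem hasGradientAt_sum_profile (hA : A.IsSymmetric)
    (hk : ∀ i ∈ s, DifferentiableAt ℝ k ⟪y - x i, A (y - x i)⟫)
    (hg : ∑ i ∈ s, -deriv k ⟪y - x i, A (y - x i)⟫ ≠ 0) :
    HasGradientAt (fun z => ∑ i ∈ s, k ⟪z - x i, A (z - x i)⟫)
      ((2 * ∑ i ∈ s, -deriv k ⟪y - x i, A (y - x i)⟫) •
        A (s.centerMass (fun i => -deriv k ⟪y - x i, A (y - x i)⟫) x - y)) y := by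
  have hsum := hasGradientAt_sum fun i hi => hasGradientAt_comp_of_hasDerivAt
    (hk i hi).hasDerivAt (hasGradientAt_inner_sub_map_sub hA (x i) y)
  convert! hsum using 1
  rw [mul_smul, ← map_smul, ← sum_smul_sub_eq_smul_centerMass_sub hg, map_sum, Finset.smul_sum]
  refine Finset.sum_congr rfl fun i _ => ?_
  rw [conj_trivial, smul_comm, neg_smul, ← smul_neg, neg_sub, map_smul]

theorem gradient_kde_eq_zero_iff_meanShift_general {c : ℝ} (hc : c ≠ 0) (hA : A.IsSymmetric)
    (hA_inj : Function.Injective A) (hk : ∀ i ∈ s, DifferentiableAt ℝ k ⟪y - x i, A (y - x i)⟫)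
    (hg : ∑ i ∈ s, -deriv k ⟪y - x i, A (y - x i)⟫ ≠ 0) :
    gradient (fun z => c * ∑ i ∈ s, k ⟪z - x i, A (z - x i)⟫) y = 0 ↔
      y = s.centerMass (fun i => -deriv k ⟪y - x i, A (y - x i)⟫) x := by
  have hgrad := hasGradientAt_comp_of_hasDerivAt (hasDerivAt_const_mul c)
    (hasGradientAt_sum_profile hA hk hg)
  rw [hgrad.gradient, conj_trivial, smul_eq_zero_iff_right hc,
    smul_eq_zero_iff_right (mul_ne_zero two_ne_zero hg), map_eq_zero_iff A hA_inj, sub_eq_zero,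
    eq_comm]

end MeanShift

/-- Fixed points of the mean shift: if `∑ᵢ g(q_i(y)) > 0` with `g = −k′`, then the gradient of
the kernel density estimator `f̂_H(y) = n⁻¹ (det H)^{−1/2} (1/2) ∑ᵢ k(q_i(y))` vanishes at `y`
if and only if `y = (∑ᵢ x_i g(q_i(y))) / (∑ᵢ g(q_i(y)))`, i.e. iff the mean shift is zero. -/
theorem gradient_kde_eq_zero_iff_meanShift {d n : ℕ} (k : ℝ → ℝ) (hk : Differentiable ℝ k)
    (x : Fin n → EuclideanSpace ℝ (Fin d))
    (H : Matrix (Fin d) (Fin d) ℝ) (hH : H.PosDef) (y : EuclideanSpace ℝ (Fin d))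
    (hpos : 0 < ∑ i, -(deriv k (msQuad H x i y))) :
    gradient (fun z => (n : ℝ)⁻¹ * H.det ^ (-(1 / 2) : ℝ) *
        (2⁻¹ * ∑ i, k (msQuad H x i z))) y = 0
      ↔ y = (∑ i, -(deriv k (msQuad H x i y)))⁻¹ •
              ∑ i, (-(deriv k (msQuad H x i y))) • x i := by
  have hn : n ≠ 0 := ne_zero_of_sum_fin_ne_zero hpos.ne'
  have hdet : 0 < H.det := hH.det_pos
  simp only [← mul_assoc]
  exact gradient_kde_eq_zero_iff_meanShift_general (by positivity)
    (Matrix.isSymmetric_toEuclideanLin_iff.mpr hH.inv.isHermitian)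
    (injective_toLpLin_of_isUnit hH.inv.isUnit 2 2) (fun _ _ => hk _) hpos.ne'
end
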